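/- arXiv:2408.15094 — 2 statements merged into one kernel-verified Lean document; each statement's English description precedes it below -/
import Mathlib

section
/- Let q, q¹, …, qᵐ be probability measures on a measurable space X and b ∈ ℝᵐ, and assume the Slater condition: there exist a probability measure p̂ and ζ > 0 with KL(qⁱ‖p̂) ≤ bᵢ − ζ for all i. Let λ* ∈ ℝ₊ᵐ be a maximizer of the dual function g(λ) = inf_p [KL(q‖p) + Σᵢ λᵢ (KL(qⁱ‖p) − bᵢ)]. Then the set of optimal solutions of the constrained problem minimize KL(q‖p) subject to KL(qⁱ‖p) ≤ bᵢ for all i (over all probability measures p on X) coincides with the set of minimizers over all probability measures p of p ↦ KL(q_mix^{(λ*)}‖p), where q_mix^{(λ*)} = (q + Σᵢ λ*ᵢ qⁱ)/(1 + Σᵢ λ*ᵢ). -/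
open MeasureTheory

/-- The Kullback–Leibler divergence `KL(μ‖ν)`, with values in `EReal`. -/
noncomputable def KL {X : Type*} [MeasurableSpace X] (μ ν : Measure X) : EReal :=
  open Classical in
  if μ ≪ ν ∧ Integrable (llr μ ν) μ then ((∫ x, llr μ ν x ∂μ : ℝ) : EReal) else ⊤

/-- The dual function `g(λ) = inf over probability measures p of
`KL(q‖p) + ∑ i, λ i * (KL(qⁱ‖p) − b i)`. -/
noncomputable def dualFn {X : Type*} [MeasurableSpace X] {m : ℕ}
    (q : Measure X) (qi : Fin m → Measure X) (b : Fin m → ℝ) (l : Fin m → ℝ) : EReal :=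
  ⨅ p : {p : Measure X // IsProbabilityMeasure p},
    KL q p.1 + ∑ i, (l i : EReal) * (KL (qi i) p.1 - (b i : EReal))

/-- The mixture distribution `q_mix^{(λ)} = (q + ∑ i, λ i • qⁱ) / (1 + ∑ i, λ i)`. -/
noncomputable def qMix {X : Type*} [MeasurableSpace X] {m : ℕ}
    (q : Measure X) (qi : Fin m → Measure X) (l : Fin m → ℝ) : Measure X :=
  (ENNReal.ofReal (1 + ∑ i, l i))⁻¹ • (q + ∑ i, ENNReal.ofReal (l i) • qi i)

open Filter Topology
open scoped ENNReal

/-- Finiteness of the divergence. -/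
def KFin {X : Type*} [MeasurableSpace X] (μ ν : Measure X) : Prop :=
  μ ≪ ν ∧ Integrable (llr μ ν) μ

noncomputable def KR {X : Type*} [MeasurableSpace X] (μ ν : Measure X) : ℝ :=
  ∫ x, llr μ ν x ∂μ

section aux
variable {X : Type*} [MeasurableSpace X]

lemma KL_fin {μ ν : Measure X} (h : KFin μ ν) : KL μ ν = (KR μ ν : EReal) := by
  unfold KL; exact if_pos h

lemma KL_not {μ ν : Measure X} (h : ¬ KFin μ ν) : KL μ ν = ⊤ := by
  unfold KL; exact if_neg h

lemma KFin_of_le {μ ν : Measure X} {c : ℝ} (h : KL μ ν ≤ (c : EReal)) : KFin μ ν ∧ KR μ ν ≤ c := by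
  by_cases hf : KFin μ ν
  · rw [KL_fin hf] at h; exact ⟨hf, by exact_mod_cast h⟩
  · rw [KL_not hf] at h; simp at h

lemma KR_nonneg {μ ν : Measure X} [IsProbabilityMeasure μ] [IsProbabilityMeasure ν]
    (h : KFin μ ν) : 0 ≤ KR μ ν := by
  have := InformationTheory.integral_llr_add_sub_measure_univ_nonneg h.1 h.2
  simpa [KR] using this

lemma eq_of_KR {μ ν : Measure X} [IsProbabilityMeasure μ] [IsProbabilityMeasure ν]
    (h : KFin μ ν) (h0 : KR μ ν ≤ 0) : μ = ν := by
  rw [← InformationTheory.klDiv_eq_zero_iff, InformationTheory.klDiv_of_ac_of_integrable h.1 h.2]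
  have : ∫ x, llr μ ν x ∂μ ≤ 0 := h0
  simpa using this

lemma KFin_self (μ : Measure X) [IsProbabilityMeasure μ] : KFin μ μ ∧ KR μ μ = 0 := by
  have h := llr_self μ
  refine ⟨⟨Measure.AbsolutelyContinuous.rfl, (integrable_congr h).2 (integrable_zero _ _ _)⟩, ?_⟩
  unfold KR
  rw [integral_congr_ae h]; simp

lemma llr_eq_neg {μ ν : Measure X} [IsProbabilityMeasure μ] [IsProbabilityMeasure ν]
    (h : μ ≪ ν) : llr μ ν =ᵐ[μ] fun x => - Real.log (ν.rnDeriv μ x).toReal := by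
  filter_upwards [neg_llr h] with x hx
  simp only [Pi.neg_apply] at hx
  simp only [llr] at hx ⊢
  linarith

lemma KFin_mono {μ p p' : Measure X} [IsProbabilityMeasure μ] [IsProbabilityMeasure p]
    [IsProbabilityMeasure p'] (h : KFin μ p) {c : ℝ} (hc : 0 < c)
    (hle : ENNReal.ofReal c • p ≤ p') : KFin μ p' ∧ KR μ p' ≤ KR μ p - Real.log c := by
  have hc0 : ENNReal.ofReal c ≠ 0 := by simpa using hc
  have hpp : p ≪ p' :=
    (Measure.absolutelyContinuous_smul hc0).trans (Measure.absolutelyContinuous_of_le hle)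
  have hac : μ ≪ p' := h.1.trans hpp
  have hdec : p' = (p' - ENNReal.ofReal c • p) + ENNReal.ofReal c • p := by
    have : IsFiniteMeasure (ENNReal.ofReal c • p) := Measure.smul_finite p ENNReal.ofReal_ne_top
    exact (Measure.sub_add_cancel_of_le hle).symm
  have hrn : ∀ᵐ x ∂μ, ENNReal.ofReal c * p.rnDeriv μ x ≤ p'.rnDeriv μ x := by
    have : IsFiniteMeasure (ENNReal.ofReal c • p) := Measure.smul_finite p ENNReal.ofReal_ne_top
    have h1 := Measure.rnDeriv_add' (p' - ENNReal.ofReal c • p) (ENNReal.ofReal c • p) μ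
    rw [← hdec] at h1
    filter_upwards [h1, Measure.rnDeriv_smul_left_of_ne_top p μ (r := ENNReal.ofReal c)
      ENNReal.ofReal_ne_top] with x hx hx2
    rw [hx, Pi.add_apply, hx2]
    simp
  have hup : ∀ᵐ x ∂μ, llr μ p' x ≤ llr μ p x - Real.log c := by
    filter_upwards [hrn, llr_eq_neg h.1, llr_eq_neg hac, Measure.rnDeriv_pos' h.1,
      Measure.rnDeriv_ne_top p μ, Measure.rnDeriv_ne_top p' μ] with x h1 h2 h3 h4 h5 h6
    rw [h2, h3]
    have h7 : 0 < (p.rnDeriv μ x).toReal := ENNReal.toReal_pos h4.ne' h5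
    have h8 : c * (p.rnDeriv μ x).toReal ≤ (p'.rnDeriv μ x).toReal := by
      have := ENNReal.toReal_mono h6 h1
      simpa [ENNReal.toReal_mul, hc.le] using this
    have := Real.log_le_log (by positivity) h8
    rw [Real.log_mul hc.ne' h7.ne'] at this
    linarith
  have hlo : ∀ᵐ x ∂μ, 1 - (p'.rnDeriv μ x).toReal ≤ llr μ p' x := by
    filter_upwards [llr_eq_neg hac, Measure.rnDeriv_pos' hac,
      Measure.rnDeriv_ne_top p' μ] with x h3 h4 h6
    rw [h3]
    have := Real.log_le_sub_one_of_pos (ENNReal.toReal_pos h4.ne' h6)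
    linarith
  have hI1 : Integrable (fun x => 1 - (p'.rnDeriv μ x).toReal) μ :=
    (integrable_const _).sub Measure.integrable_toReal_rnDeriv
  have hI2 : Integrable (fun x => llr μ p x - Real.log c) μ := h.2.sub (integrable_const _)
  have hI : Integrable (llr μ p') μ :=
    integrable_of_le_of_le (measurable_llr _ _).aestronglyMeasurable hlo hup hI1 hI2
  refine ⟨⟨hac, hI⟩, ?_⟩
  unfold KR
  calc _ ≤ ∫ x, (llr μ p x - Real.log c) ∂μ := integral_mono_ae hI hI2 hup
    _ = _ := by rw [integral_sub h.2 (integrable_const _)]; simp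

lemma fatou_log {μ : Measure X} [IsProbabilityMeasure μ] {h : X → ℝ} (hm : Measurable h)
    (h0 : ∀ x, 0 ≤ h x) (hi : Integrable h μ) {B : ℝ} {s : ℕ → ℝ} (hs : ∀ n, 0 < s n)
    (hs1 : ∀ n, s n < 1) (hst : Tendsto s atTop (𝓝 0))
    (hint : ∀ n, Integrable (fun x => Real.log ((1 - s n) * h x + s n)) μ)
    (hB : ∀ n, - ∫ x, Real.log ((1 - s n) * h x + s n) ∂μ ≤ B) :
    (∀ᵐ x ∂μ, 0 < h x) ∧ Integrable (fun x => Real.log (h x)) μ ∧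
      - ∫ x, Real.log (h x) ∂μ ≤ B := by
  set u : ℕ → X → ℝ := fun n x => (1 - s n) * h x + s n with hu
  have hupos : ∀ n x, 0 < u n x := fun n x => by
    have := mul_nonneg (sub_nonneg.2 (hs1 n).le) (h0 x)
    have := hs n
    simp only [hu]; linarith
  have huI : ∀ n, Integrable (u n) μ := fun n => (hi.const_mul _).add (integrable_const _)
  set g : ℕ → X → ℝ := fun n x => u n x - 1 - Real.log (u n x) with hg
  have hgI : ∀ n, Integrable (g n) μ := fun n => ((huI n).sub (integrable_const _)).sub (hint n)
  have hg0 : ∀ n x, 0 ≤ g n x := fun n x => by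
    have := Real.log_le_sub_one_of_pos (hupos n x); simp only [hg]; linarith
  have hgm : ∀ n, Measurable (g n) := fun n => by simp only [hg, hu]; fun_prop
  have hgint : ∀ n, ∫ x, g n x ∂μ ≤ (1 - s n) * ∫ x, h x ∂μ + s n - 1 + B := fun n => by
    have e1 : ∫ x, g n x ∂μ = ∫ x, u n x ∂μ - 1 - ∫ x, Real.log (u n x) ∂μ := by
      have hI1 : Integrable (fun x => u n x - 1) μ := (huI n).sub (integrable_const _)
      have hI2 : Integrable (fun x => Real.log (u n x)) μ := hint n
      simp only [hg]
      rw [integral_sub hI1 hI2, integral_sub (huI n) (integrable_const _)]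
      simp
    have e2 : ∫ x, u n x ∂μ = (1 - s n) * ∫ x, h x ∂μ + s n := by
      simp only [hu]
      rw [integral_add (hi.const_mul _) (integrable_const _), integral_const_mul]
      simp
    have := hB n
    rw [e1, e2]; linarith
  have hut : ∀ x, Tendsto (fun n => u n x) atTop (𝓝 (h x)) := fun x => by
    have := ((tendsto_const_nhds (x := (1:ℝ))).sub hst).mul_const (h x) |>.add hst
    simpa [hu] using this
  have hfat : ∫⁻ x, liminf (fun n => ENNReal.ofReal (g n x)) atTop ∂μ
      ≤ ENNReal.ofReal (∫ x, h x ∂μ - 1 + B) := by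
    refine (lintegral_liminf_le fun n => (hgm n).ennreal_ofReal).trans ?_
    have ht : Tendsto (fun n => ENNReal.ofReal ((1 - s n) * ∫ x, h x ∂μ + s n - 1 + B)) atTop
        (𝓝 (ENNReal.ofReal (∫ x, h x ∂μ - 1 + B))) := by
      apply ENNReal.tendsto_ofReal
      have := (((tendsto_const_nhds (x := (1:ℝ))).sub hst).mul_const (∫ x, h x ∂μ)
        |>.add hst).sub_const 1 |>.add_const B
      simpa using this
    rw [← ht.liminf_eq]
    refine liminf_le_liminf (Eventually.of_forall fun n => ?_)
    rw [← ofReal_integral_eq_lintegral_ofReal (hgI n) (Eventually.of_forall (hg0 n))]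
    exact ENNReal.ofReal_le_ofReal (hgint n)
  have hlim0 : ∀ x, h x = 0 → liminf (fun n => ENNReal.ofReal (g n x)) atTop = ⊤ := by
    intro x hx
    apply Tendsto.liminf_eq
    refine ENNReal.tendsto_ofReal_nhds_top.2 ?_
    have h1 : Tendsto (fun n => u n x) atTop (𝓝[>] 0) :=
      tendsto_nhdsWithin_iff.2 ⟨hx ▸ hut x, Eventually.of_forall fun n => hupos n x⟩
    have h2 := tendsto_neg_atBot_atTop.comp (Real.tendsto_log_nhdsGT_zero.comp h1)
    have := ((hut x).sub_const 1).add_atTop h2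
    refine this.congr fun n => ?_
    simp [hg]; ring
  have hlimpos : ∀ x, 0 < h x → liminf (fun n => ENNReal.ofReal (g n x)) atTop
      = ENNReal.ofReal (h x - 1 - Real.log (h x)) := by
    intro x hx
    apply Tendsto.liminf_eq
    apply ENNReal.tendsto_ofReal
    exact ((hut x).sub_const 1).sub ((hut x).log hx.ne')
  have hae : ∀ᵐ x ∂μ, 0 < h x := by
    have := ae_lt_top' (μ := μ) (f := fun x => liminf (fun n => ENNReal.ofReal (g n x)) atTop)
      (Measurable.liminf fun n => (hgm n).ennreal_ofReal).aemeasurable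
      (hfat.trans_lt ENNReal.ofReal_lt_top).ne
    filter_upwards [this] with x hx
    refine lt_of_le_of_ne (h0 x) fun h => ?_
    rw [hlim0 x h.symm] at hx
    exact lt_irrefl _ hx
  have hfat2 : ∫⁻ x, ENNReal.ofReal (h x - 1 - Real.log (h x)) ∂μ
      ≤ ENNReal.ofReal (∫ x, h x ∂μ - 1 + B) := by
    refine le_trans (le_of_eq (lintegral_congr_ae ?_)) hfat
    filter_upwards [hae] with x hx
    exact (hlimpos x hx).symm
  have hGm : Measurable fun x => h x - 1 - Real.log (h x) := by fun_prop
  have hG0 : 0 ≤ᵐ[μ] fun x => h x - 1 - Real.log (h x) := by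
    filter_upwards [hae] with x hx
    have := Real.log_le_sub_one_of_pos hx
    simp only [Pi.zero_apply]; linarith
  have hGI : Integrable (fun x => h x - 1 - Real.log (h x)) μ :=
    (lintegral_ofReal_ne_top_iff_integrable hGm.aestronglyMeasurable hG0).1
      (hfat2.trans_lt ENNReal.ofReal_lt_top).ne
  have hLI : Integrable (fun x => Real.log (h x)) μ := by
    have := (hi.sub (integrable_const (1:ℝ))).sub hGI
    refine this.congr (Eventually.of_forall fun x => ?_)
    simp
  refine ⟨hae, hLI, ?_⟩
  have hb : 0 ≤ ∫ x, h x ∂μ - 1 + B := by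
    have h1 : Tendsto (fun n => (1 - s n) * ∫ x, h x ∂μ + s n - 1 + B) atTop
        (𝓝 (∫ x, h x ∂μ - 1 + B)) := by
      have := (((tendsto_const_nhds (x := (1:ℝ))).sub hst).mul_const (∫ x, h x ∂μ)
        |>.add hst).sub_const 1 |>.add_const B
      simpa using this
    exact ge_of_tendsto' h1 fun n => (integral_nonneg (hg0 n)).trans (hgint n)
  have hI1 : Integrable (fun x => h x - 1) μ := hi.sub (integrable_const _)
  rw [← ofReal_integral_eq_lintegral_ofReal hGI hG0, ENNReal.ofReal_le_ofReal_iff hb,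
    integral_sub hI1 hLI, integral_sub hi (integrable_const _)] at hfat2
  simp at hfat2
  linarith

lemma KFin_limit {μ p : Measure X} [IsProbabilityMeasure μ] [IsProbabilityMeasure p] {B : ℝ}
    {s : ℕ → ℝ} (hs : ∀ n, 0 < s n)
    (hs1 : ∀ n, s n < 1) (hst : Tendsto s atTop (𝓝 0)) (P : ℕ → Measure X)
    (hP1 : ∀ n, IsProbabilityMeasure (P n))
    (hP : ∀ n, P n = ENNReal.ofReal (1 - s n) • p + ENNReal.ofReal (s n) • μ)
    (hfin : ∀ n, KFin μ (P n)) (hB : ∀ n, KR μ (P n) ≤ B) : KFin μ p ∧ KR μ p ≤ B := by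
  have key : ∀ n, (fun x => Real.log ((1 - s n) * (p.rnDeriv μ x).toReal + s n)) =ᵐ[μ]
      fun x => - llr μ (P n) x := by
    intro n
    have := hP1 n
    have i1 : IsFiniteMeasure (ENNReal.ofReal (1 - s n) • p) :=
      Measure.smul_finite p ENNReal.ofReal_ne_top
    have i2 : IsFiniteMeasure (ENNReal.ofReal (s n) • μ) :=
      Measure.smul_finite μ ENNReal.ofReal_ne_top
    have h1 := Measure.rnDeriv_add' (ENNReal.ofReal (1 - s n) • p) (ENNReal.ofReal (s n) • μ) μ
    rw [← hP] at h1
    filter_upwards [h1, llr_eq_neg (hfin n).1,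
      Measure.rnDeriv_smul_left_of_ne_top p μ (r := ENNReal.ofReal (1 - s n)) ENNReal.ofReal_ne_top,
      Measure.rnDeriv_smul_left_of_ne_top μ μ (r := ENNReal.ofReal (s n)) ENNReal.ofReal_ne_top,
      μ.rnDeriv_self, Measure.rnDeriv_ne_top p μ] with x h1 h2 h3 h4 h5 h6
    rw [h2, h1, Pi.add_apply, h3, h4, Pi.smul_apply, Pi.smul_apply, h5, neg_neg, smul_eq_mul,
      smul_eq_mul, mul_one, ENNReal.toReal_add (ENNReal.mul_ne_top ENNReal.ofReal_ne_top h6)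
      ENNReal.ofReal_ne_top, ENNReal.toReal_mul, ENNReal.toReal_ofReal (hs n).le,
      ENNReal.toReal_ofReal (sub_nonneg.2 (hs1 n).le)]
  obtain ⟨h1, h2, h3⟩ := fatou_log (μ := μ) (h := fun x => (p.rnDeriv μ x).toReal) (B := B)
    (Measure.measurable_rnDeriv p μ).ennreal_toReal (fun x => ENNReal.toReal_nonneg)
    Measure.integrable_toReal_rnDeriv hs hs1 hst
    (fun n => (integrable_congr (key n)).2 (hfin n).2.neg)
    (fun n => by
      rw [integral_congr_ae (key n), integral_neg, neg_neg]
      exact hB n)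
  have hac : μ ≪ p := by
    refine (withDensity_absolutelyContinuous' (Measure.measurable_rnDeriv p μ).aemeasurable ?_).trans
      (Measure.absolutelyContinuous_of_le (Measure.withDensity_rnDeriv_le p μ))
    filter_upwards [h1] with x hx h
    rw [h] at hx; simp at hx
  refine ⟨⟨hac, (integrable_congr (llr_eq_neg hac)).2 h2.neg⟩, ?_⟩
  unfold KR
  rw [integral_congr_ae (llr_eq_neg hac), integral_neg]
  exact h3

lemma KFin_chain {μ M p : Measure X} [IsProbabilityMeasure μ] [IsProbabilityMeasure M]
    [IsProbabilityMeasure p] (h1 : KFin μ M) (h2 : KFin μ p) (hM : M ≪ p) :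
    Integrable (llr M p) μ ∧ ∫ x, llr M p x ∂μ = KR μ p - KR μ M := by
  have key : llr M p =ᵐ[μ] fun x => llr μ p x - llr μ M x := by
    filter_upwards [h2.1 (Measure.rnDeriv_mul_rnDeriv (κ := p) h1.1), Measure.rnDeriv_pos h1.1,
      h1.1 (Measure.rnDeriv_ne_top μ M), h1.1 (Measure.rnDeriv_pos hM),
      h2.1 (Measure.rnDeriv_ne_top M p)] with x h1 h2 h3 h4 h5
    simp only [llr]
    rw [← h1, Pi.mul_apply, ENNReal.toReal_mul, Real.log_mul (ENNReal.toReal_pos h2.ne' h3).ne'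
      (ENNReal.toReal_pos h4.ne' h5).ne']
    ring
  refine ⟨(integrable_congr key).2 (h2.2.sub h1.2), ?_⟩
  rw [integral_congr_ae key, integral_sub h2.2 h1.2]; rfl

lemma mix_key {ι : Type*} [Fintype ι] {μ : ι → Measure X} (hμ : ∀ i, IsProbabilityMeasure (μ i))
    {w : ι → ℝ} (hw : ∀ i, 0 ≤ w i) (hW : 0 < ∑ i, w i) {M : Measure X}
    (hM1 : IsProbabilityMeasure M)
    (hM : ENNReal.ofReal (∑ i, w i) • M = ∑ i, ENNReal.ofReal (w i) • μ i) :
    (∀ i, 0 < w i → KFin (μ i) M) ∧ ∀ p : Measure X, IsProbabilityMeasure p →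
      (∀ i, 0 < w i → KFin (μ i) p) → KFin M p ∧
        ∑ i, w i * KR (μ i) p = (∑ i, w i) * KR M p + ∑ i, w i * KR (μ i) M := by
  have hA : ∀ i, 0 < w i → KFin (μ i) M := by
    intro i hi
    have := hμ i
    refine (KFin_mono (KFin_self (μ i)).1 (c := w i / ∑ i, w i) (by positivity) ?_).1
    have h1 : ENNReal.ofReal (w i) • μ i ≤ ENNReal.ofReal (∑ i, w i) • M := by
      rw [hM]
      exact Finset.single_le_sum (f := fun i => ENNReal.ofReal (w i) • μ i)
        (fun _ _ => Measure.zero_le _) (Finset.mem_univ i)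
    intro s
    have h2 := h1 s
    simp only [Measure.smul_apply, smul_eq_mul] at h2 ⊢
    rw [ENNReal.ofReal_div_of_pos hW, ENNReal.div_eq_inv_mul, mul_assoc]
    rw [ENNReal.inv_mul_le_iff (by simpa using hW) ENNReal.ofReal_ne_top]
    exact h2
  refine ⟨hA, fun p hp hf => ?_⟩
  have hMp : M ≪ p := by
    refine (Measure.absolutelyContinuous_smul (c := ENNReal.ofReal (∑ i, w i))
      (by simpa using hW)).trans ?_
    rw [hM]
    intro s hs
    simp only [Measure.coe_finsetSum, Finset.sum_apply, Measure.smul_apply, smul_eq_mul]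
    refine Finset.sum_eq_zero fun i _ => ?_
    rcases (hw i).eq_or_lt with h | h
    · simp [← h]
    · simp [(hf i h).1 hs]
  have hI : ∀ i, Integrable (llr M p) (ENNReal.ofReal (w i) • μ i) := by
    intro i
    have := hμ i
    rcases (hw i).eq_or_lt with h | h
    · simp [← h]
    · exact (KFin_chain (hA i h) (hf i h) hMp).1.smul_measure ENNReal.ofReal_ne_top
  have hIM : Integrable (llr M p) M := by
    have : Integrable (llr M p) (ENNReal.ofReal (∑ i, w i) • M) := by
      rw [hM]; exact integrable_finsetSum_measure.2 fun i _ => hI i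
    exact (integrable_smul_measure (by simpa using hW) ENNReal.ofReal_ne_top).1 this
  refine ⟨⟨hMp, hIM⟩, ?_⟩
  have e : ∫ x, llr M p x ∂(ENNReal.ofReal (∑ i, w i) • M)
      = ∑ i, ∫ x, llr M p x ∂(ENNReal.ofReal (w i) • μ i) := by
    rw [hM]; exact integral_finsetSum_measure fun i _ => hI i
  rw [integral_smul_measure, ENNReal.toReal_ofReal hW.le] at e
  have e2 : ∀ i, ∫ x, llr M p x ∂(ENNReal.ofReal (w i) • μ i)
      = w i * KR (μ i) p - w i * KR (μ i) M := by
    intro i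
    have := hμ i
    rcases (hw i).eq_or_lt with h | h
    · simp [← h]
    · rw [integral_smul_measure, ENNReal.toReal_ofReal h.le, (KFin_chain (hA i h) (hf i h) hMp).2,
        smul_eq_mul, mul_sub]
  simp only [e2, Finset.sum_sub_distrib, smul_eq_mul] at e
  change _ * KR M p = _ at e
  linarith

section main
variable {m : ℕ}

lemma qMix_smul (q : Measure X) (qi : Fin m → Measure X) {l : Fin m → ℝ} (hl : ∀ i, 0 ≤ l i) :
    ENNReal.ofReal (1 + ∑ i, l i) • qMix q qi l = q + ∑ i, ENNReal.ofReal (l i) • qi i := by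
  have : 0 < 1 + ∑ i, l i := by
    have := Finset.sum_nonneg fun i (_ : i ∈ Finset.univ) => hl i
    linarith
  rw [qMix, smul_smul, ENNReal.mul_inv_cancel (by simpa using this) ENNReal.ofReal_ne_top, one_smul]

lemma qMix_prob (q : Measure X) [IsProbabilityMeasure q] (qi : Fin m → Measure X)
    (hqi : ∀ i, IsProbabilityMeasure (qi i)) {l : Fin m → ℝ} (hl : ∀ i, 0 ≤ l i) :
    IsProbabilityMeasure (qMix q qi l) := by
  have h0 := Finset.sum_nonneg fun i (_ : i ∈ Finset.univ) => hl i
  have : 0 < 1 + ∑ i, l i := by linarith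
  constructor
  have e : (q + ∑ i, ENNReal.ofReal (l i) • qi i) Set.univ = ENNReal.ofReal (1 + ∑ i, l i) := by
    simp only [Measure.add_apply, Measure.coe_finsetSum, Finset.sum_apply, Measure.smul_apply,
      measure_univ, smul_eq_mul, mul_one]
    rw [ENNReal.ofReal_add zero_le_one h0, ENNReal.ofReal_sum_of_nonneg fun i _ => hl i]
    simp
  rw [qMix, Measure.smul_apply, e, smul_eq_mul,
    ENNReal.inv_mul_cancel (by simpa using this) ENNReal.ofReal_ne_top]

lemma mix_main (q : Measure X) [IsProbabilityMeasure q] (qi : Fin m → Measure X)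
    (hqi : ∀ i, IsProbabilityMeasure (qi i)) {l : Fin m → ℝ} (hl : ∀ i, 0 ≤ l i) :
    KFin q (qMix q qi l) ∧ (∀ i, 0 < l i → KFin (qi i) (qMix q qi l)) ∧
    ∀ p : Measure X, IsProbabilityMeasure p → KFin q p → (∀ i, 0 < l i → KFin (qi i) p) →
      KFin (qMix q qi l) p ∧ KR q p + ∑ i, l i * KR (qi i) p
        = (1 + ∑ i, l i) * KR (qMix q qi l) p
          + (KR q (qMix q qi l) + ∑ i, l i * KR (qi i) (qMix q qi l)) := by
  have h0 := Finset.sum_nonneg fun i (_ : i ∈ Finset.univ) => hl i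
  have hM1 := qMix_prob q qi hqi hl
  have := mix_key (μ := fun o : Option (Fin m) => o.elim q qi) (w := fun o => o.elim 1 l)
    (M := qMix q qi l)
    (by rintro (_ | i); exacts [inferInstanceAs (IsProbabilityMeasure q), hqi i])
    (by rintro (_ | i); exacts [zero_le_one, hl i])
    (by simp [Fintype.sum_option]; linarith) hM1
    (by simpa [Fintype.sum_option] using qMix_smul q qi hl)
  obtain ⟨hA, hB⟩ := this
  refine ⟨hA none one_pos, fun i hi => hA (some i) hi, fun p hp hq hi => ?_⟩
  have := hB p hp (by rintro (_ | i) h; exacts [hq, hi i h])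
  simpa [Fintype.sum_option] using this

lemma esum_ne_bot {ι : Type*} (s : Finset ι) (f : ι → EReal) (h : ∀ i, f i ≠ ⊥) :
    ∑ i ∈ s, f i ≠ ⊥ := by
  classical
  induction s using Finset.induction_on with
  | empty => simp
  | insert a s ha ih =>
    rw [Finset.sum_insert ha]
    exact EReal.add_ne_bot_iff.2 ⟨h a, ih⟩

lemma KL_ne_bot (μ ν : Measure X) : KL μ ν ≠ ⊥ := by
  by_cases h : KFin μ ν
  · rw [KL_fin h]; exact EReal.coe_ne_bot _
  · rw [KL_not h]; simp

lemma ereal_coe_sum {ι : Type*} (s : Finset ι) (f : ι → ℝ) :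
    ((∑ i ∈ s, f i : ℝ) : EReal) = ∑ i ∈ s, (f i : EReal) := by
  classical
  induction s using Finset.induction_on with
  | empty => simp
  | insert a s ha ih => rw [Finset.sum_insert ha, Finset.sum_insert ha, EReal.coe_add, ih]

lemma lag_fin (q : Measure X) (qi : Fin m → Measure X) (b : Fin m → ℝ) {l : Fin m → ℝ}
    (hl : ∀ i, 0 ≤ l i) {p : Measure X} (hq : KFin q p) (hi : ∀ i, 0 < l i → KFin (qi i) p) :
    KL q p + ∑ i, (l i : EReal) * (KL (qi i) p - (b i : EReal))
      = ((KR q p + ∑ i, l i * (KR (qi i) p - b i) : ℝ) : EReal) := by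
  rw [EReal.coe_add, KL_fin hq, ereal_coe_sum]
  congr 1
  refine Finset.sum_congr rfl fun i _ => ?_
  rcases (hl i).eq_or_lt with h | h
  · simp [← h]
  · rw [KL_fin (hi i h)]; norm_cast

lemma lag_ge (q : Measure X) (qi : Fin m → Measure X) (b : Fin m → ℝ) {l : Fin m → ℝ}
    (hl : ∀ i, 0 ≤ l i) {p : Measure X} {c : ℝ}
    (h : KFin q p → (∀ i, 0 < l i → KFin (qi i) p) →
      c ≤ KR q p + ∑ i, l i * (KR (qi i) p - b i)) :
    (c : EReal) ≤ KL q p + ∑ i, (l i : EReal) * (KL (qi i) p - (b i : EReal)) := by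
  have hterm : ∀ i, (l i : EReal) * (KL (qi i) p - (b i : EReal)) ≠ ⊥ := by
    intro i
    by_cases hf : KFin (qi i) p
    · rw [KL_fin hf]; norm_cast; exact EReal.coe_ne_bot _
    · rw [KL_not hf]
      rcases (hl i).eq_or_lt with h | h
      · simp [← h]
      · rw [EReal.top_sub_coe, EReal.coe_mul_top_of_pos h]; simp
  by_cases hq : KFin q p
  · by_cases hi : ∀ i, 0 < l i → KFin (qi i) p
    · rw [lag_fin q qi b hl hq hi]; exact_mod_cast h hq hi
    · push Not at hi
      obtain ⟨i, hi0, hi⟩ := hi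
      rw [← Finset.add_sum_erase _ _ (Finset.mem_univ i), KL_not hi, EReal.top_sub_coe,
        EReal.coe_mul_top_of_pos hi0, EReal.top_add_of_ne_bot (esum_ne_bot _ _ hterm),
        EReal.add_top_of_ne_bot (KL_ne_bot _ _)]
      exact le_top
  · rw [KL_not hq, EReal.top_add_of_ne_bot (esum_ne_bot _ _ hterm)]
    exact le_top

lemma split_sum (l r b : Fin m → ℝ) :
    ∑ i, l i * (r i - b i) = ∑ i, l i * r i - ∑ i, l i * b i := by
  rw [← Finset.sum_sub_distrib]; exact Finset.sum_congr rfl fun i _ => by ring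

lemma dual_ineq (q : Measure X) [IsProbabilityMeasure q] (qi : Fin m → Measure X)
    (hqi : ∀ i, IsProbabilityMeasure (qi i)) (b : Fin m → ℝ)
    (lstar : Fin m → ℝ) (hlstar : ∀ i, 0 ≤ lstar i)
    (hmax : ∀ l : Fin m → ℝ, (∀ i, 0 ≤ l i) → dualFn q qi b l ≤ dualFn q qi b lstar)
    (l : Fin m → ℝ) (hl : ∀ i, 0 ≤ l i) (hs : ∀ i, 0 < lstar i → 0 < l i) :
    ∑ i, l i * (KR (qi i) (qMix q qi l) - b i) ≤ ∑ i, lstar i * (KR (qi i) (qMix q qi l) - b i) := by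
  have hM1 := qMix_prob q qi hqi hl
  obtain ⟨h1, h2, h3⟩ := mix_main q qi hqi hl
  have a1 : ((KR q (qMix q qi l) + ∑ i, l i * (KR (qi i) (qMix q qi l) - b i) : ℝ) : EReal)
      ≤ dualFn q qi b l := by
    refine le_iInf fun p => lag_ge q qi b hl fun hq hi => ?_
    have := p.2
    obtain ⟨k1, k2⟩ := h3 p.1 p.2 hq hi
    have k3 := KR_nonneg k1
    have h0 := Finset.sum_nonneg fun i (_ : i ∈ Finset.univ) => hl i
    have k4 : 0 ≤ (1 + ∑ i, l i) * KR (qMix q qi l) p.1 := mul_nonneg (by linarith) k3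
    rw [split_sum l (fun i => KR (qi i) (qMix q qi l)), split_sum l (fun i => KR (qi i) p.1)]
    linarith
  have a2 : dualFn q qi b lstar
      ≤ ((KR q (qMix q qi l) + ∑ i, lstar i * (KR (qi i) (qMix q qi l) - b i) : ℝ) : EReal) := by
    rw [← lag_fin q qi b hlstar h1 fun i hi => h2 i (hs i hi)]
    exact iInf_le (fun p : {p : Measure X // IsProbabilityMeasure p} =>
      KL q p.1 + ∑ i, (lstar i : EReal) * (KL (qi i) p.1 - (b i : EReal))) ⟨_, hM1⟩
  have := (a1.trans (hmax l hl)).trans a2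
  rw [EReal.coe_le_coe_iff] at this
  linarith

lemma mix_feasible (q : Measure X) [IsProbabilityMeasure q] (qi : Fin m → Measure X)
    (hqi : ∀ i, IsProbabilityMeasure (qi i)) (b : Fin m → ℝ)
    (lstar : Fin m → ℝ) (hlstar : ∀ i, 0 ≤ lstar i)
    (hmax : ∀ l : Fin m → ℝ, (∀ i, 0 ≤ l i) → dualFn q qi b l ≤ dualFn q qi b lstar) (i : Fin m) :
    KFin (qi i) (qMix q qi lstar) ∧ KR (qi i) (qMix q qi lstar) ≤ b i := by
  have hM1 := qMix_prob q qi hqi hlstar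
  have hqi' := hqi i
  have h0 := Finset.sum_nonneg fun i (_ : i ∈ Finset.univ) => hlstar i
  set Λ := 1 + ∑ i, lstar i with hΛ
  have hΛ0 : 0 < Λ := by linarith
  set s : ℕ → ℝ := fun n => 1 / ((n : ℝ) + 2) with hsdef
  have hs : ∀ n, 0 < s n := fun n => by simp only [hsdef]; positivity
  have hs1 : ∀ n, s n < 1 := fun n => by
    simp only [hsdef]
    rw [div_lt_one (by positivity)]
    have : (0:ℝ) ≤ n := Nat.cast_nonneg n
    linarith
  have hst : Tendsto s atTop (𝓝 0) := by
    have := (tendsto_one_div_add_atTop_nhds_zero_nat (𝕜 := ℝ)).comp (tendsto_add_atTop_nat 1)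
    refine this.congr fun n => ?_
    simp only [hsdef, Function.comp]; push_cast; ring
  set t : ℕ → ℝ := fun n => Λ * s n / (1 - s n) with htdef
  have ht : ∀ n, 0 < t n := fun n =>
    div_pos (mul_pos hΛ0 (hs n)) (sub_pos.2 (hs1 n))
  set l : ℕ → Fin m → ℝ := fun n j => lstar j + if j = i then t n else 0 with hldef
  have hite : ∀ n j, 0 ≤ if j = i then t n else 0 := fun n j => by
    split_ifs; exacts [(ht n).le, le_rfl]
  have hl : ∀ n j, 0 ≤ l n j := fun n j => add_nonneg (hlstar j) (hite n j)
  have hsum : ∀ n, 1 + ∑ j, l n j = Λ + t n := fun n => by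
    simp [hldef, Finset.sum_add_distrib, hΛ]; ring
  refine KFin_limit hs hs1 hst (fun n => qMix q qi (l n)) (fun n => qMix_prob q qi hqi (hl n))
    (fun n => ?_) (fun n => ?_) (fun n => ?_)
  · have e1 := qMix_smul q qi (hl n)
    have e2 := qMix_smul q qi hlstar
    have hpos : 0 < Λ + t n := add_pos hΛ0 (ht n)
    have hs1' := sub_pos.2 (hs1 n)
    rw [hsum] at e1
    have e3 : ENNReal.ofReal (Λ + t n) • qMix q qi (l n)
        = ENNReal.ofReal Λ • qMix q qi lstar + ENNReal.ofReal (t n) • qi i := by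
      rw [e1, e2, add_assoc]
      congr 1
      simp only [hldef]
      simp_rw [ENNReal.ofReal_add (hlstar _) (hite n _), add_smul]
      rw [Finset.sum_add_distrib]
      congr 1
      rw [Finset.sum_eq_single i]
      · simp
      · intro j _ hj; simp [hj]
      · simp
    have e4 : qMix q qi (l n) = (ENNReal.ofReal (Λ + t n))⁻¹ •
        (ENNReal.ofReal Λ • qMix q qi lstar + ENNReal.ofReal (t n) • qi i) := by
      rw [← e3, smul_smul, ENNReal.inv_mul_cancel (by simpa using hpos) ENNReal.ofReal_ne_top,
        one_smul]
    rw [e4, smul_add, smul_smul, smul_smul, ← ENNReal.ofReal_inv_of_pos hpos,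
      ← ENNReal.ofReal_mul (by positivity), ← ENNReal.ofReal_mul (by positivity)]
    have hne := hs1'.ne'
    have f0 : Λ + t n = Λ / (1 - s n) := by simp only [htdef]; field_simp; ring
    have f1 : (Λ + t n)⁻¹ * Λ = 1 - s n := by rw [f0]; field_simp
    have f2 : (Λ + t n)⁻¹ * t n = s n := by rw [f0]; simp only [htdef]; field_simp
    rw [f1, f2]
  · exact (mix_main q qi hqi (hl n)).2.1 i (by
      have := ht n; have := hlstar i; simp only [hldef, if_true]; linarith)
  · have := dual_ineq q qi hqi b lstar hlstar hmax (l n) (hl n) fun j hj =>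
      add_pos_of_pos_of_nonneg hj (hite n j)
    have e : ∑ j, l n j * (KR (qi j) (qMix q qi (l n)) - b j)
        = ∑ j, lstar j * (KR (qi j) (qMix q qi (l n)) - b j)
          + t n * (KR (qi i) (qMix q qi (l n)) - b i) := by
      conv_lhs => enter [2, j]; rw [show l n j = lstar j + if j = i then t n else 0 from rfl, add_mul]
      rw [Finset.sum_add_distrib]
      simp
    rw [e] at this
    have h3 : t n * (KR (qi i) (qMix q qi (l n)) - b i) ≤ 0 := by linarith
    by_contra hcon
    push Not at hcon
    have := mul_pos (ht n) (sub_pos.2 hcon)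
    linarith

lemma mix_slack (q : Measure X) [IsProbabilityMeasure q] (qi : Fin m → Measure X)
    (hqi : ∀ i, IsProbabilityMeasure (qi i)) (b : Fin m → ℝ)
    (lstar : Fin m → ℝ) (hlstar : ∀ i, 0 ≤ lstar i)
    (hmax : ∀ l : Fin m → ℝ, (∀ i, 0 ≤ l i) → dualFn q qi b l ≤ dualFn q qi b lstar) :
    0 ≤ ∑ i, lstar i * (KR (qi i) (qMix q qi lstar) - b i) := by
  have hM1 := qMix_prob q qi hqi hlstar
  have h0 := Finset.sum_nonneg fun i (_ : i ∈ Finset.univ) => hlstar i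
  have key : ∀ t : ℝ, 0 < t → t < 1 → (∑ i, lstar i) * Real.log (1 - t)
      ≤ ∑ i, lstar i * (KR (qi i) (qMix q qi lstar) - b i) := by
    intro t ht ht1
    have ht' : 0 < 1 - t := sub_pos.2 ht1
    set l : Fin m → ℝ := fun i => (1 - t) * lstar i with hldef
    have hl : ∀ i, 0 ≤ l i := fun i => mul_nonneg ht'.le (hlstar i)
    have hl1 := qMix_prob q qi hqi hl
    have hd := dual_ineq q qi hqi b lstar hlstar hmax l hl fun i hi => mul_pos ht' hi
    have e : ∑ i, l i * (KR (qi i) (qMix q qi l) - b i)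
        = (1 - t) * ∑ i, lstar i * (KR (qi i) (qMix q qi l) - b i) := by
      rw [Finset.mul_sum]; exact Finset.sum_congr rfl fun i _ => by simp only [hldef]; ring
    rw [e] at hd
    have h1 : 0 ≤ ∑ i, lstar i * (KR (qi i) (qMix q qi l) - b i) := by
      by_contra hcon
      push Not at hcon
      nlinarith
    have hle : ENNReal.ofReal (1 - t) • qMix q qi lstar ≤ qMix q qi l := by
      unfold qMix
      rw [smul_comm, smul_add, Finset.smul_sum]
      intro s
      simp only [Measure.smul_apply, Measure.add_apply, Measure.coe_finsetSum, Finset.sum_apply,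
        smul_eq_mul]
      gcongr ?_ * (?_ + ∑ i, ?_) with i
      · apply ENNReal.inv_le_inv.2
        apply ENNReal.ofReal_le_ofReal
        gcongr with i
        simp only [hldef]; nlinarith [hlstar i]
      · calc _ ≤ 1 * q s := by
              gcongr
              rw [← ENNReal.ofReal_one]; exact ENNReal.ofReal_le_ofReal (by linarith)
          _ = q s := one_mul _
      · simp only [hldef]
        rw [ENNReal.ofReal_mul ht'.le, mul_assoc]
    have h2 : ∀ i, lstar i * KR (qi i) (qMix q qi l)
        ≤ lstar i * (KR (qi i) (qMix q qi lstar) - Real.log (1 - t)) := by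
      intro i
      have := hqi i
      rcases (hlstar i).eq_or_lt with h | h
      · simp [← h]
      · exact mul_le_mul_of_nonneg_left
          (KFin_mono ((mix_main q qi hqi hlstar).2.1 i h) ht' hle).2 h.le
    have h3 : ∑ i, lstar i * (KR (qi i) (qMix q qi l) - b i)
        ≤ ∑ i, (lstar i * (KR (qi i) (qMix q qi lstar) - b i) - lstar i * Real.log (1 - t)) :=
      Finset.sum_le_sum fun i _ => by have := h2 i; linarith
    rw [Finset.sum_sub_distrib, ← Finset.sum_mul] at h3
    linarith
  have hc : Tendsto (fun t : ℝ => (∑ i, lstar i) * Real.log (1 - t)) (𝓝[>] 0) (𝓝 0) := by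
    have : ContinuousAt (fun t : ℝ => (∑ i, lstar i) * Real.log (1 - t)) 0 :=
      continuousAt_const.mul ((continuousAt_const.sub continuousAt_id).log (by simp))
    have h := this.tendsto
    simp at h
    exact h.mono_left nhdsWithin_le_nhds
  refine le_of_tendsto hc ?_
  filter_upwards [Ioo_mem_nhdsGT (zero_lt_one (α := ℝ))] with t ht
  exact key t ht.1 ht.2

end main
end aux

/-- under the Slater condition, if `λ*` maximizes the dual function over
`ℝ₊ᵐ`, then the set of optimal solutions of the constrained problem
`min KL(q‖p) s.t. KL(qⁱ‖p) ≤ bᵢ` coincides with the set of minimizers of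
`p ↦ KL(q_mix^{(λ*)}‖p)` over all probability measures `p`. -/
theorem stmt2 {X : Type*} [MeasurableSpace X] {m : ℕ}
    (q : Measure X) [IsProbabilityMeasure q]
    (qi : Fin m → Measure X) (hqi : ∀ i, IsProbabilityMeasure (qi i))
    (b : Fin m → ℝ)
    (hSlater : ∃ phat : Measure X, IsProbabilityMeasure phat ∧
      ∃ ζ : ℝ, 0 < ζ ∧ ∀ i, KL (qi i) phat ≤ ((b i - ζ : ℝ) : EReal))
    (lstar : Fin m → ℝ) (hlstar : ∀ i, 0 ≤ lstar i)
    (hmax : ∀ l : Fin m → ℝ, (∀ i, 0 ≤ l i) → dualFn q qi b l ≤ dualFn q qi b lstar) :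
    {p : Measure X | IsProbabilityMeasure p ∧ (∀ i, KL (qi i) p ≤ (b i : EReal)) ∧
        ∀ p' : Measure X, IsProbabilityMeasure p' → (∀ i, KL (qi i) p' ≤ (b i : EReal)) →
          KL q p ≤ KL q p'}
      = {p : Measure X | IsProbabilityMeasure p ∧
          ∀ p' : Measure X, IsProbabilityMeasure p' →
            KL (qMix q qi lstar) p ≤ KL (qMix q qi lstar) p'} := by
  have hM1 := qMix_prob q qi hqi hlstar
  have hfeas := mix_feasible q qi hqi b lstar hlstar hmax
  have hsl := mix_slack q qi hqi b lstar hlstar hmax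
  obtain ⟨hqM, -, h3⟩ := mix_main q qi hqi hlstar
  have h0 := Finset.sum_nonneg fun i (_ : i ∈ Finset.univ) => hlstar i
  set M := qMix q qi lstar with hM
  have hfeasE : ∀ i, KL (qi i) M ≤ (b i : EReal) := fun i => by
    rw [KL_fin (hfeas i).1]; exact_mod_cast (hfeas i).2
  have hselfE : KL M M = 0 := by
    rw [KL_fin (KFin_self M).1, (KFin_self M).2]; rfl
  have key : ∀ p : Measure X, IsProbabilityMeasure p → KFin q p →
      (∀ i, KL (qi i) p ≤ (b i : EReal)) →
      KFin M p ∧ KR q M + (1 + ∑ i, lstar i) * KR M p ≤ KR q p := by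
    intro p hp hq hi
    obtain ⟨k1, k2⟩ := h3 p hp hq fun i _ => (KFin_of_le (hi i)).1
    refine ⟨k1, ?_⟩
    have k3 : ∑ i, lstar i * (KR (qi i) p - b i) ≤ 0 := Finset.sum_nonpos fun i _ =>
      mul_nonpos_of_nonneg_of_nonpos (hlstar i) (sub_nonpos.2 (KFin_of_le (hi i)).2)
    rw [split_sum lstar (fun i => KR (qi i) p)] at k3
    rw [split_sum lstar (fun i => KR (qi i) M)] at hsl
    linarith
  ext p
  simp only [Set.mem_setOf_eq]
  constructor
  · rintro ⟨hp, hi, hopt⟩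
    have hle := hopt M hM1 hfeasE
    rw [KL_fin hqM] at hle
    obtain ⟨hq, hqle⟩ := KFin_of_le hle
    obtain ⟨k1, k2⟩ := key p hp hq hi
    have hpM : M = p := eq_of_KR k1 (by
      by_contra hcon
      push Not at hcon
      have : 0 < (1 + ∑ i, lstar i) * KR M p := mul_pos (by linarith) hcon
      linarith)
    rw [← hpM]
    refine ⟨hM1, fun p' hp' => ?_⟩
    rw [hselfE]
    by_cases hf : KFin M p'
    · rw [KL_fin hf]; exact_mod_cast KR_nonneg hf
    · rw [KL_not hf]; exact le_top
  · rintro ⟨hp, hmin⟩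
    have h := hmin M hM1
    rw [hselfE] at h
    obtain ⟨k1, k2⟩ := KFin_of_le (c := 0) h
    have hpM : M = p := eq_of_KR k1 k2
    rw [← hpM]
    refine ⟨hM1, hfeasE, fun p' hp' hi' => ?_⟩
    by_cases hq : KFin q p'
    · obtain ⟨k1, k2⟩ := key p' hp' hq hi'
      rw [KL_fin hqM, KL_fin hq]
      have : 0 ≤ (1 + ∑ i, lstar i) * KR M p' := mul_nonneg (by linarith) (KR_nonneg k1)
      have : KR q M ≤ KR q p' := by linarith
      exact_mod_cast this
    · rw [KL_not hq]; exact le_top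
end

section
/- Let q, q¹, …, qᵐ be probability measures on a measurable space X and let λ, λ′ ∈ ℝ₊ᵐ. Then the total variation distance between the two mixtures satisfies TV(q_mix^{(λ)}, q_mix^{(λ′)}) ≤ ‖λ − λ′‖₁, where q_mix^{(λ)} = (q + Σᵢ λᵢ qⁱ)/(1 + Σᵢ λᵢ) and ‖λ − λ′‖₁ = Σᵢ |λᵢ − λ′ᵢ|. -/
open MeasureTheory

/-- The total variation distance between two measures:
`TV(μ, ν) = sup over measurable sets A of |μ(A) − ν(A)|`. -/
noncomputable def TV {X : Type*} [MeasurableSpace X] (μ ν : Measure X) : ℝ :=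
  sSup {r : ℝ | ∃ A : Set X, MeasurableSet A ∧ r = |(μ A).toReal - (ν A).toReal|}

theorem qMix_toReal {X : Type*} [MeasurableSpace X] {m : ℕ}
    (q : Measure X) [IsProbabilityMeasure q]
    (qi : Fin m → Measure X) (hqi : ∀ i, IsProbabilityMeasure (qi i))
    (l : Fin m → ℝ) (hl : ∀ i, 0 ≤ l i) (A : Set X) :
    (qMix q qi l A).toReal = (q.real A + ∑ i, l i * (qi i).real A) / (1 + ∑ i, l i) := by
  have hS : 0 ≤ ∑ i, l i := Finset.sum_nonneg fun i _ => hl i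
  have h1 : ∀ i ∈ Finset.univ, ENNReal.ofReal (l i) * qi i A ≠ ⊤ := fun i _ =>
    ENNReal.mul_ne_top ENNReal.ofReal_ne_top (measure_ne_top _ _)
  simp only [qMix, Measure.smul_apply, Measure.add_apply, Measure.finsetSum_apply, smul_eq_mul]
  rw [ENNReal.toReal_mul, ENNReal.toReal_inv, ENNReal.toReal_ofReal (by linarith),
    ENNReal.toReal_add (measure_ne_top _ _) (ENNReal.sum_ne_top.2 h1), ENNReal.toReal_sum h1,
    div_eq_inv_mul]
  congr 2
  refine Finset.sum_congr rfl fun i _ => ?_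
  rw [ENNReal.toReal_mul, ENNReal.toReal_ofReal (hl i)]
  rfl

/-- for probability measures `q, q¹, …, qᵐ` and nonnegative vectors
`λ, λ′`, the total variation distance between the mixtures is bounded by the `ℓ¹`
distance: `TV(q_mix^{(λ)}, q_mix^{(λ′)}) ≤ ‖λ − λ′‖₁`. -/
theorem stmt12 {X : Type*} [MeasurableSpace X] {m : ℕ}
    (q : Measure X) [IsProbabilityMeasure q]
    (qi : Fin m → Measure X) (hqi : ∀ i, IsProbabilityMeasure (qi i))
    (l l' : Fin m → ℝ) (hl : ∀ i, 0 ≤ l i) (hl' : ∀ i, 0 ≤ l' i) :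
    TV (qMix q qi l) (qMix q qi l') ≤ ∑ i, |l i - l' i| := by
  have hS : 0 ≤ ∑ i, l i := Finset.sum_nonneg fun i _ => hl i
  have hS' : 0 ≤ ∑ i, l' i := Finset.sum_nonneg fun i _ => hl' i
  have hR : 0 ≤ ∑ i, |l i - l' i| := Finset.sum_nonneg fun i _ => abs_nonneg _
  refine Real.sSup_le ?_ hR
  rintro r ⟨A, -, rfl⟩
  rw [qMix_toReal q qi hqi l hl, qMix_toReal q qi hqi l' hl']
  have hb0 : ∀ i, 0 ≤ (qi i).real A := fun i => measureReal_nonneg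
  have hb1 : ∀ i, (qi i).real A ≤ 1 := fun i => measureReal_le_one
  have ha0 : 0 ≤ q.real A := measureReal_nonneg
  have ha1 : q.real A ≤ 1 := measureReal_le_one
  set p := (q.real A + ∑ i, l' i * (qi i).real A) / (1 + ∑ i, l' i) with hp
  have hp0 : 0 ≤ p := div_nonneg
    (add_nonneg ha0 (Finset.sum_nonneg fun i _ => mul_nonneg (hl' i) (hb0 i))) (by linarith)
  have hp1 : p ≤ 1 := by
    rw [hp, div_le_one (by linarith)]
    exact add_le_add ha1 (Finset.sum_le_sum fun i _ => mul_le_of_le_one_right (hl' i) (hb1 i))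
  have hpe : p * (1 + ∑ i, l' i) = q.real A + ∑ i, l' i * (qi i).real A :=
    div_mul_cancel₀ _ (by linarith)
  have key : (q.real A + ∑ i, l i * (qi i).real A) / (1 + ∑ i, l i) - p
      = (∑ i, (l i - l' i) * ((qi i).real A - p)) / (1 + ∑ i, l i) := by
    have hne : 1 + ∑ i, l i ≠ 0 := by linarith
    have e : ∑ i, (l i - l' i) * ((qi i).real A - p) = ∑ i, l i * (qi i).real A
        - ∑ i, l' i * (qi i).real A - (∑ i, l i) * p + (∑ i, l' i) * p := by
      rw [Finset.sum_mul, Finset.sum_mul, ← Finset.sum_sub_distrib, ← Finset.sum_sub_distrib,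
        ← Finset.sum_add_distrib]
      exact Finset.sum_congr rfl fun i _ => by ring
    rw [eq_div_iff hne, sub_mul, div_mul_cancel₀ _ hne, e]
    linarith
  rw [key, abs_div, abs_of_pos (by linarith : 0 < 1 + ∑ i, l i)]
  refine (div_le_self (abs_nonneg _) (by linarith)).trans ?_
  refine (Finset.abs_sum_le_sum_abs _ _).trans (Finset.sum_le_sum fun i _ => ?_)
  rw [abs_mul]
  refine mul_le_of_le_one_right (abs_nonneg _) (abs_le.2 ⟨?_, ?_⟩)
  · linarith [hb0 i]
  · linarith [hb1 i]
end
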